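/- arXiv:2112.09430 — 2 statements merged into one kernel-verified Lean document; each statement's English description precedes it below -/
import Mathlib

section
/- Let p ≥ 3 and q = 2, and set n = p + q. The action of O(p,q) on the flag manifold F_{1,n-2} = {(V₁, V₂) : V₁ ⊆ V₂ ⊆ ℝⁿ, dim V₁ = 1, dim V₂ = n−2} has exactly 15 orbits. (By the correspondence established in the paper, this is the number of left-invariant pseudo-Riemannian metrics of signature (p,2) on H₃ × ℝ^{n−3} up to scaling and automorphisms.) -/
open Module

noncomputable section

/-- The radical of a subspace `W` with respect to a bilinear form `B`:
the set of vectors of `W` orthogonal to every vector of `W`. -/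
def rad {V : Type*} [AddCommGroup V] [Module ℝ V] (B : LinearMap.BilinForm ℝ V)
    (W : Submodule ℝ V) : Submodule ℝ V :=
  W ⊓ LinearMap.BilinForm.orthogonal B W

/-- The maximal dimension of a subspace of `W` on which `B` is positive definite. -/
def posIdx {V : Type*} [AddCommGroup V] [Module ℝ V] (B : LinearMap.BilinForm ℝ V)
    (W : Submodule ℝ V) : ℕ :=
  sSup {k | ∃ P : Submodule ℝ V, P ≤ W ∧ finrank ℝ P = k ∧ ∀ x ∈ P, x ≠ 0 → 0 < B x x}

/-- The maximal dimension of a subspace of `W` on which `B` is negative definite. -/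
def negIdx {V : Type*} [AddCommGroup V] [Module ℝ V] (B : LinearMap.BilinForm ℝ V)
    (W : Submodule ℝ V) : ℕ :=
  sSup {k | ∃ P : Submodule ℝ V, P ≤ W ∧ finrank ℝ P = k ∧ ∀ x ∈ P, x ≠ 0 → B x x < 0}

/-- The signature `(s, t, u)` of a subspace `W` with respect to a bilinear form `B`. -/
def signat {V : Type*} [AddCommGroup V] [Module ℝ V] (B : LinearMap.BilinForm ℝ V)
    (W : Submodule ℝ V) : ℕ × ℕ × ℕ :=
  (posIdx B W, negIdx B W, finrank ℝ (rad B W))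

/-- The standard inner product of signature `(p, q)` on `ℝ^(p+q)`,
given by the diagonal matrix `I_{p,q}`. -/
def stdForm (p q : ℕ) : LinearMap.BilinForm ℝ (Fin (p + q) → ℝ) :=
  Matrix.toLinearMap₂' ℝ (Matrix.diagonal fun i => if (i : ℕ) < p then (1 : ℝ) else -1)

/-- The flag manifold `F_{1, p+q-2}`: pairs `(V₁, V₂)` of subspaces of `ℝ^(p+q)` with
`V₁ ⊆ V₂`, `dim V₁ = 1` and `dim V₂ = p+q-2`. -/
def FlagPQ (p q : ℕ) : Type :=
  {VW : Submodule ℝ (Fin (p + q) → ℝ) × Submodule ℝ (Fin (p + q) → ℝ) //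
    VW.1 ≤ VW.2 ∧ finrank ℝ VW.1 = 1 ∧ finrank ℝ VW.2 = p + q - 2}

/-- Two flags lie in the same `O(p,q)`-orbit: there is a linear automorphism of `ℝ^(p+q)`
preserving the standard form of signature `(p,q)` carrying one flag to the other. -/
def orbitRel (p q : ℕ) (F G : FlagPQ p q) : Prop :=
  ∃ g : (Fin (p + q) → ℝ) ≃ₗ[ℝ] (Fin (p + q) → ℝ),
    (∀ x y, stdForm p q (g x) (g y) = stdForm p q x y) ∧
      F.1.1 = (G.1.1).map g.toLinearMap ∧ F.1.2 = (G.1.2).map g.toLinearMap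


def Iso {V : Type*} [AddCommGroup V] [Module ℝ V] (B : LinearMap.BilinForm ℝ V)
    (g : V ≃ₗ[ℝ] V) : Prop := ∀ x y, B (g x) (g y) = B x y

section W
variable {V : Type*} [AddCommGroup V] [Module ℝ V] {B : LinearMap.BilinForm ℝ V}

theorem exists_refl (hs : ∀ x y, B x y = B y x) (v : V) (hv : B v v ≠ 0) :
    ∃ g : V ≃ₗ[ℝ] V, Iso B g ∧ ∀ x, g x = x - (2 * B v x / B v v) • v := by
  have h : ((2 / B v v) • B v) v = 2 := by
    simp only [LinearMap.smul_apply, smul_eq_mul]; field_simp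
  have key : ∀ x, Module.reflection h x = x - (2 * B v x / B v v) • v := by
    intro x
    rw [Module.reflection_apply]
    simp only [LinearMap.smul_apply, smul_eq_mul]
    congr 2; ring
  refine ⟨Module.reflection h, ?_, key⟩
  intro x y
  rw [key, key]
  simp only [map_sub, map_smul, LinearMap.sub_apply, LinearMap.smul_apply, smul_eq_mul]
  rw [hs x v]
  field_simp
  ring

theorem exists_move (hs : ∀ x y, B x y = B y x) (x y : V) (hx : B x x ≠ 0) (hxy : B x x = B y y) :
    ∃ g : V ≃ₗ[ℝ] V, Iso B g ∧ g x = y ∧ ∀ w, B x w = 0 → B y w = 0 → g w = w := by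
  by_cases h : B (x - y) (x - y) = 0
  · have h' : B (x + y) (x + y) ≠ 0 := by
      intro h'
      simp only [map_sub, map_add, LinearMap.sub_apply, LinearMap.add_apply] at h h'
      apply hx; linarith
    obtain ⟨g, hg, hg'⟩ := exists_refl hs (x + y) h'
    obtain ⟨k, hk, hk'⟩ := exists_refl hs y (hxy ▸ hx)
    refine ⟨g.trans k, fun a b => by simp [hk _ _, hg _ _], ?_, ?_⟩
    · have h1 : 2 * B (x + y) x / B (x + y) (x + y) = 1 := by
        rw [div_eq_one_iff_eq h']
        simp only [map_add, LinearMap.add_apply]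
        rw [hs y x]; linarith
      have h2 : g x = -y := by rw [hg', h1]; module
      have h3 : 2 * B y y / B y y = 2 := by
        have := hxy ▸ hx; field_simp
      simp only [LinearEquiv.trans_apply, h2, map_neg]
      rw [hk', h3]; module
    · intro w h1 h2
      simp [hg', hk', h1, h2]
  · obtain ⟨g, hg, hg'⟩ := exists_refl hs (x - y) h
    refine ⟨g, hg, ?_, ?_⟩
    · have h1 : 2 * B (x - y) x / B (x - y) (x - y) = 1 := by
        rw [div_eq_one_iff_eq h]
        simp only [map_sub, LinearMap.sub_apply]
        rw [hs y x]; linarith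
      rw [hg', h1]; module
    · intro w h1 h2
      simp [hg', h1, h2]

theorem witt_nondeg (hs : ∀ x y, B x y = B y x) {ι : Type} [Fintype ι] (e e' : ι → V)
    (ho : ∀ i j, i ≠ j → B (e i) (e j) = 0) (ho' : ∀ i j, i ≠ j → B (e' i) (e' j) = 0)
    (h0 : ∀ i, B (e i) (e i) ≠ 0) (heq : ∀ i, B (e i) (e i) = B (e' i) (e' i)) :
    ∃ g : V ≃ₗ[ℝ] V, Iso B g ∧ ∀ i, g (e i) = e' i := by
  classical
  suffices H : ∀ s : Finset ι, ∃ g : V ≃ₗ[ℝ] V, Iso B g ∧ ∀ i ∈ s, g (e i) = e' i by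
    obtain ⟨g, hg, h⟩ := H Finset.univ
    exact ⟨g, hg, fun i => h i (Finset.mem_univ i)⟩
  intro s
  induction s using Finset.induction_on with
  | empty => exact ⟨LinearEquiv.refl ℝ V, fun x y => rfl, by simp⟩
  | insert a s ha ih =>
    obtain ⟨g, hg, h⟩ := ih
    obtain ⟨k, hk, hk1, hk2⟩ := exists_move hs (g (e a)) (e' a) (by rw [hg]; exact h0 a)
      (by rw [hg]; exact heq a)
    refine ⟨g.trans k, fun x y => by simp [hk _ _, hg _ _], ?_⟩
    intro i hi
    rw [Finset.mem_insert] at hi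
    rcases hi with rfl | hi
    · simpa using hk1
    · have hne : a ≠ i := by rintro rfl; exact ha hi
      simp only [LinearEquiv.trans_apply]
      rw [hk2 _ (by rw [hg]; exact ho _ _ hne) (by rw [h i hi]; exact ho' _ _ hne), h i hi]

variable [FiniteDimensional ℝ V]

theorem exists_dual (hn : ∀ x, (∀ y, B x y = 0) → x = 0) {m : ℕ}
    (r : Fin m → V) (hr : LinearIndependent ℝ r) (f : Fin m → ℝ) :
    ∃ s, ∀ i, B (r i) s = f i := by
  have hsurj : Function.Surjective (LinearMap.pi (fun i => B (r i)) : V →ₗ[ℝ] (Fin m → ℝ)) := by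
    rw [← LinearMap.range_eq_top]
    by_contra hne
    obtain ⟨φ, hφ, hφ'⟩ := Submodule.exists_le_ker_of_lt_top _ (lt_top_iff_ne_top.2 hne)
    apply hφ
    have hc : ∀ w : Fin m → ℝ, φ w = ∑ i, w i * φ (Pi.single i 1) := by
      intro w
      conv_lhs => rw [LinearMap.pi_apply_eq_sum_univ φ w]
      refine Finset.sum_congr rfl fun i _ => ?_
      rw [smul_eq_mul]
      congr 2
      ext j
      simp [Pi.single_apply, eq_comm]
    have hz : ∑ i, φ (Pi.single i 1) • r i = 0 := by
      apply hn
      intro y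
      have := hφ' (LinearMap.mem_range_self _ y)
      rw [LinearMap.mem_ker, hc] at this
      simpa [LinearMap.sum_apply, mul_comm] using this
    have := Fintype.linearIndependent_iff.1 hr _ hz
    ext i
    simpa using this i
  obtain ⟨s, hs⟩ := hsurj f
  exact ⟨s, fun i => congrFun hs i⟩

theorem exists_hyp (hs : ∀ x y, B x y = B y x) (hn : ∀ x, (∀ y, B x y = 0) → x = 0)
    {ι : Type} [Fintype ι] {m : ℕ}
    (e : ι → V) (r : Fin (m + 1) → V)
    (ho : ∀ i j, i ≠ j → B (e i) (e j) = 0)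
    (h0 : ∀ i, B (e i) (e i) ≠ 0)
    (hr0 : ∀ i j, B (r i) (r j) = 0) (her : ∀ i j, B (e i) (r j) = 0)
    (hr : LinearIndependent ℝ r) :
    ∃ s, B s s = 0 ∧ B (r 0) s = 1 ∧ (∀ i : Fin m, B (r i.succ) s = 0) ∧ ∀ i, B (e i) s = 0 := by
  classical
  obtain ⟨s, h⟩ := exists_dual hn r hr (Pi.single 0 1)
  obtain ⟨t, ht⟩ : ∃ t, t = s - ∑ i, (B (e i) s / B (e i) (e i)) • e i := ⟨_, rfl⟩
  have ht1 : ∀ i, B (r i) t = B (r i) s := by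
    intro i
    rw [ht]
    simp [hs (r i) (e _), her]
  have ht2 : ∀ i, B (e i) t = 0 := by
    intro i
    rw [ht]
    simp only [map_sub, map_sum, map_smul, smul_eq_mul]
    rw [Finset.sum_eq_single i]
    · have := h0 i; field_simp; simp
    · intro j _ hj
      rw [ho i j hj.symm]; simp
    · simp
  have h1 : B (r 0) t = 1 := by rw [ht1, h]; simp
  refine ⟨t - (B t t / 2) • r 0, ?_, ?_, ?_, ?_⟩
  · simp only [map_sub, map_smul, LinearMap.sub_apply, LinearMap.smul_apply, smul_eq_mul, hr0, h1,
      hs t (r 0)]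
    ring
  · simp [h1, hr0]
  · intro i; simp [hr0, ht1, h]
  · intro i; simp [ht2, her]

/-- adjoin two vectors -/
def adj {ι : Type} (e : ι → V) (a b : V) : Option (Option ι) → V
  | none => a
  | some none => b
  | some (some i) => e i

theorem witt_aux (hs : ∀ x y, B x y = B y x) (hn : ∀ x, (∀ y, B x y = 0) → x = 0) (m : ℕ) :
    ∀ (ι : Type) [Fintype ι] (e e' : ι → V) (r r' : Fin m → V)
    (_ : ∀ i j, i ≠ j → B (e i) (e j) = 0) (_ : ∀ i j, i ≠ j → B (e' i) (e' j) = 0)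
    (_ : ∀ i, B (e i) (e i) ≠ 0) (_ : ∀ i, B (e i) (e i) = B (e' i) (e' i))
    (_ : ∀ i j, B (r i) (r j) = 0) (_ : ∀ i j, B (e i) (r j) = 0)
    (_ : ∀ i j, B (r' i) (r' j) = 0) (_ : ∀ i j, B (e' i) (r' j) = 0)
    (_ : LinearIndependent ℝ r) (_ : LinearIndependent ℝ r'),
    ∃ g : V ≃ₗ[ℝ] V, Iso B g ∧ (∀ i, g (e i) = e' i) ∧ ∀ i, g (r i) = r' i := by
  induction m with
  | zero =>
    intro ι _ e e' r r' ho ho' h0 heq _ _ _ _ _ _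
    obtain ⟨g, hg, h⟩ := witt_nondeg hs e e' ho ho' h0 heq
    exact ⟨g, hg, h, fun i => i.elim0⟩
  | succ m ih =>
    intro ι _ e e' r r' ho ho' h0 heq hr0 her hr0' her' hr hr'
    obtain ⟨s, s1, s2, s3, s4⟩ := exists_hyp hs hn e r ho h0 hr0 her hr
    obtain ⟨s', s1', s2', s3', s4'⟩ := exists_hyp hs hn e' r' ho' (fun i => heq i ▸ h0 i)
      hr0' her' hr'
    have her2 : ∀ i j, B (r j) (e i) = 0 := fun i j => by rw [hs]; exact her i j
    have her2' : ∀ i j, B (r' j) (e' i) = 0 := fun i j => by rw [hs]; exact her' i j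
    have t2 : B s (r 0) = 1 := by rw [hs]; exact s2
    have t2' : B s' (r' 0) = 1 := by rw [hs]; exact s2'
    have t3 : ∀ i : Fin m, B s (r i.succ) = 0 := fun i => by rw [hs]; exact s3 i
    have t3' : ∀ i : Fin m, B s' (r' i.succ) = 0 := fun i => by rw [hs]; exact s3' i
    have t4 : ∀ i, B s (e i) = 0 := fun i => by rw [hs]; exact s4 i
    have t4' : ∀ i, B s' (e' i) = 0 := fun i => by rw [hs]; exact s4' i
    obtain ⟨g, hg, h1, h2⟩ := ih (Option (Option ι)) (adj e (r 0 + s) (r 0 - s))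
      (adj e' (r' 0 + s') (r' 0 - s')) (fun i => r i.succ) (fun i => r' i.succ)
      (by
        rintro (_ | _ | i) (_ | _ | j) hij <;> simp [adj, *] at hij ⊢
        exact ho _ _ hij)
      (by
        rintro (_ | _ | i) (_ | _ | j) hij <;> simp [adj, *] at hij ⊢
        exact ho' _ _ hij)
      (by
        rintro (_ | _ | i)
        · simp [adj, *]
        · simp [adj, *]; norm_num
        · exact h0 i)
      (by
        rintro (_ | _ | i)
        · simp [adj, *]
        · simp [adj, *]
        · exact heq i)
      (fun i j => hr0 _ _)
      (by rintro (_ | _ | i) j <;> simp [adj, *])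
      (fun i j => hr0' _ _)
      (by rintro (_ | _ | i) j <;> simp [adj, *])
      (hr.comp _ (Fin.succ_injective m)) (hr'.comp _ (Fin.succ_injective m))
    refine ⟨g, hg, fun i => h1 (some (some i)), ?_⟩
    intro i
    refine Fin.cases ?_ h2 i
    have a1 := h1 none
    have a2 := h1 (some none)
    simp only [adj, map_add, map_sub] at a1 a2
    have : (2 : ℝ) • g (r 0) = (2 : ℝ) • r' 0 := by
      rw [two_smul, two_smul]
      calc g (r 0) + g (r 0) = (g (r 0) + g s) + (g (r 0) - g s) := by abel
        _ = _ := by rw [a1, a2]; abel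
    exact smul_right_injective V (two_ne_zero' ℝ) this

theorem witt (hs : ∀ x y, B x y = B y x) (hn : ∀ x, (∀ y, B x y = 0) → x = 0)
    {ι : Type} [Fintype ι] (u u' : ι → V)
    (ho : ∀ i j, i ≠ j → B (u i) (u j) = 0) (ho' : ∀ i j, i ≠ j → B (u' i) (u' j) = 0)
    (heq : ∀ i, B (u i) (u i) = B (u' i) (u' i))
    (hu : LinearIndependent ℝ u) (hu' : LinearIndependent ℝ u') :
    ∃ g : V ≃ₗ[ℝ] V, Iso B g ∧ ∀ i, g (u i) = u' i := by
  classical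
  let E := {i // B (u i) (u i) ≠ 0}
  let R := {i // B (u i) (u i) = 0}
  let φ := (Fintype.equivFin R).symm
  have hall : ∀ i j : R, B (u i) (u j) = 0 := by
    intro i j
    by_cases h : i = j
    · subst h; exact i.2
    · exact ho _ _ (fun h' => h (Subtype.ext h'))
  have hall' : ∀ i j : R, B (u' i) (u' j) = 0 := by
    intro i j
    by_cases h : i = j
    · subst h; rw [← heq]; exact i.2
    · exact ho' _ _ (fun h' => h (Subtype.ext h'))
  have hER : ∀ (i : E) (j : R), (i : ι) ≠ j := fun i j h => i.2 (h ▸ j.2)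
  obtain ⟨g, hg, h1, h2⟩ := witt_aux hs hn (Fintype.card R) E (fun i => u i) (fun i => u' i)
    (fun i => u (φ i)) (fun i => u' (φ i))
    (fun i j h => ho _ _ (fun h' => h (Subtype.ext h')))
    (fun i j h => ho' _ _ (fun h' => h (Subtype.ext h')))
    (fun i => i.2) (fun i => heq i) (fun i j => hall _ _) (fun i j => ho _ _ (hER _ _))
    (fun i j => hall' _ _) (fun i j => ho' _ _ (hER _ _))
    (hu.comp _ (Subtype.val_injective.comp φ.injective))
    (hu'.comp _ (Subtype.val_injective.comp φ.injective))
  refine ⟨g, hg, fun i => ?_⟩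
  by_cases h : B (u i) (u i) = 0
  · have := h2 (φ.symm ⟨i, h⟩)
    simpa using this
  · exact h1 ⟨i, h⟩

end W

section Std

theorem stdForm_eq (p q : ℕ) (x y : Fin (p + q) → ℝ) :
    stdForm p q x y = ∑ i : Fin (p + q), (if (i : ℕ) < p then (1 : ℝ) else -1) * (x i * y i) := by
  simp only [stdForm, Matrix.toLinearMap₂'_apply', Matrix.mulVec_diagonal, dotProduct]
  refine Finset.sum_congr rfl fun i _ => ?_
  ring

theorem std_symm (p q : ℕ) (x y : Fin (p + q) → ℝ) : stdForm p q x y = stdForm p q y x := by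
  rw [stdForm_eq, stdForm_eq]
  refine Finset.sum_congr rfl fun i _ => ?_
  ring

theorem std_single (p q : ℕ) (x : Fin (p + q) → ℝ) (i : Fin (p + q)) :
    stdForm p q x (Pi.single i 1) = (if (i : ℕ) < p then (1 : ℝ) else -1) * x i := by
  rw [stdForm_eq, Finset.sum_eq_single i]
  · simp
  · intro j _ hj; simp [hj]
  · simp

theorem std_nondeg (p q : ℕ) (x : Fin (p + q) → ℝ) (h : ∀ y, stdForm p q x y = 0) : x = 0 := by
  ext i
  have := h (Pi.single i 1)
  rw [std_single] at this
  split_ifs at this <;> simpa using this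

theorem std_nd (p q : ℕ) : (stdForm p q).Nondegenerate := by
  refine ⟨fun x h => std_nondeg p q x h, fun x h => std_nondeg p q x fun y => ?_⟩
  rw [std_symm]; exact h y

theorem std_refl (p q : ℕ) : (stdForm p q).IsRefl := by
  intro x y h; rw [std_symm]; exact h

theorem std_isSymm (p q : ℕ) : (stdForm p q).IsSymm := ⟨fun x y => std_symm p q x y⟩

theorem mem_orth_pair {V : Type*} [AddCommGroup V] [Module ℝ V] (B : LinearMap.BilinForm ℝ V)
    (u v x : V) :
    x ∈ LinearMap.BilinForm.orthogonal B (Submodule.span ℝ {u, v}) ↔ B u x = 0 ∧ B v x = 0 := by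
  rw [LinearMap.BilinForm.mem_orthogonal_iff]
  constructor
  · intro h
    exact ⟨h u (Submodule.subset_span (by simp)), h v (Submodule.subset_span (by simp))⟩
  · rintro ⟨h1, h2⟩ n hn
    obtain ⟨a, b, rfl⟩ := Submodule.mem_span_pair.1 hn
    simp [h1, h2]

theorem map_orth_pair {V : Type*} [AddCommGroup V] [Module ℝ V] (B : LinearMap.BilinForm ℝ V)
    (g : V ≃ₗ[ℝ] V) (hg : Iso B g) (u v : V) :
    (LinearMap.BilinForm.orthogonal B (Submodule.span ℝ {u, v})).map g.toLinearMap =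
    LinearMap.BilinForm.orthogonal B (Submodule.span ℝ {g u, g v}) := by
  ext x
  rw [mem_orth_pair, Submodule.mem_map]
  constructor
  · rintro ⟨y, hy, rfl⟩
    rw [mem_orth_pair] at hy
    simpa [hg _ _] using hy
  · intro h
    refine ⟨g.symm x, ?_, by simp⟩
    rw [mem_orth_pair, ← hg, ← hg v]
    simpa using h

theorem exists_scale {V : Type*} [AddCommGroup V] [Module ℝ V] (B : LinearMap.BilinForm ℝ V)
    (x : V) : ∃ c : ℝ, c ≠ 0 ∧ ∃ σ : SignType, B (c • x) (c • x) = (σ : ℝ) := by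
  by_cases h : B x x = 0
  · exact ⟨1, one_ne_zero, 0, by simp [h]⟩
  · have hpos : 0 < |B x x| := abs_pos.2 h
    refine ⟨(√|B x x|)⁻¹, inv_ne_zero (Real.sqrt_pos.2 hpos).ne', SignType.sign (B x x), ?_⟩
    simp only [map_smul, LinearMap.smul_apply, smul_eq_mul]
    rw [← mul_assoc, ← mul_inv, Real.mul_self_sqrt hpos.le]
    nth_rewrite 2 [← sign_mul_abs (B x x)]
    field_simp

theorem span_pair_smul {V : Type*} [AddCommGroup V] [Module ℝ V] (u v : V) (c d : ℝ)
    (hc : c ≠ 0) (hd : d ≠ 0) :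
    Submodule.span ℝ {c • u, d • v} = Submodule.span ℝ {u, v} := by
  rw [Submodule.span_insert, Submodule.span_insert,
    Submodule.span_singleton_smul_eq (IsUnit.mk0 c hc),
    Submodule.span_singleton_smul_eq (IsUnit.mk0 d hd)]

theorem range_pair {V : Type*} (u v : V) : Set.range ![u, v] = {u, v} := by
  ext x
  simp only [Set.mem_range, Fin.exists_fin_two, Set.mem_insert_iff, Set.mem_singleton_iff]
  simp [eq_comm]

theorem li_pair {V : Type*} [AddCommGroup V] [Module ℝ V] (u v : V)
    (h : finrank ℝ (Submodule.span ℝ {u, v}) = 2) : LinearIndependent ℝ ![u, v] := by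
  rw [linearIndependent_iff_card_eq_finrank_span]
  rw [Set.finrank, range_pair, h]
  simp

theorem finrank_pair {V : Type*} [AddCommGroup V] [Module ℝ V] (u v : V)
    (h : LinearIndependent ℝ ![u, v]) : finrank ℝ (Submodule.span ℝ {u, v}) = 2 := by
  have := finrank_span_eq_card h
  rw [range_pair] at this
  simpa using this

theorem exists_normal {V : Type*} [AddCommGroup V] [Module ℝ V] [FiniteDimensional ℝ V]
    (B : LinearMap.BilinForm ℝ V) (hB : B.IsSymm) (U : Submodule ℝ V) (hU : finrank ℝ U = 2) :
    ∃ u v : V, ∃ a b : SignType, b ≤ a ∧ U = Submodule.span ℝ {u, v} ∧ B u v = 0 ∧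
      B u u = (a : ℝ) ∧ B v v = (b : ℝ) := by
  obtain ⟨w, hw⟩ := LinearMap.BilinForm.exists_orthogonal_basis
    (B := LinearMap.BilinForm.restrict B U) ⟨fun x y => hB.eq _ _⟩
  let w' := w.reindex (finCongr hU)
  have hsp : U = Submodule.span ℝ {(w' 0 : V), (w' 1 : V)} := by
    have h1 := congrArg (Submodule.map U.subtype) w'.span_eq
    rw [Submodule.map_span, Submodule.map_top, Submodule.range_subtype] at h1
    refine h1.symm.trans ?_
    congr 1
    ext x
    simp [Set.mem_image, Fin.exists_fin_two, eq_comm]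
  have ho : B (w' 0 : V) (w' 1 : V) = 0 := by
    have : (finCongr hU).symm 0 ≠ (finCongr hU).symm 1 := by simp
    have h2 : B (w ((finCongr hU).symm 0) : V) (w ((finCongr hU).symm 1) : V) = 0 := hw this
    simpa [w'] using h2
  obtain ⟨c, hc, a, ha⟩ := exists_scale B (w' 0 : V)
  obtain ⟨d, hd, b, hb⟩ := exists_scale B (w' 1 : V)
  have ho2 : B (w' 1 : V) (w' 0 : V) = 0 := by rw [hB.eq]; exact ho
  rcases le_total b a with h | h
  · exact ⟨_, _, a, b, h, hsp.trans (span_pair_smul _ _ c d hc hd).symm, by simp [ho], ha, hb⟩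
  · refine ⟨_, _, b, a, h, hsp.trans ?_, ?_, hb, ha⟩
    · rw [span_pair_smul _ _ d c hd hc, Set.pair_comm]
    · simp [ho2]

theorem no_nonpos (p : ℕ) (u : Fin 3 → (Fin (p + 2) → ℝ))
    (ho : ∀ i j, i ≠ j → stdForm p 2 (u i) (u j) = 0) (hq : ∀ i, stdForm p 2 (u i) (u i) ≤ 0)
    (hu : LinearIndependent ℝ u) : False := by
  let A : (Fin 3 → ℝ) →ₗ[ℝ] (Fin 2 → ℝ) :=
    (LinearMap.funLeft ℝ ℝ (Fin.natAdd p : Fin 2 → Fin (p + 2))).comp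
      (Fintype.linearCombination ℝ u)
  have hk : LinearMap.ker A ≠ ⊥ := LinearMap.ker_ne_bot_of_finrank_lt (by simp)
  obtain ⟨c, hc, hc0⟩ := (Submodule.ne_bot_iff _).1 hk
  obtain ⟨x, hx⟩ : ∃ x, x = ∑ i, c i • u i := ⟨_, rfl⟩
  have hlast : ∀ j : Fin 2, x (Fin.natAdd p j) = 0 := by
    intro j
    have := congrFun (LinearMap.mem_ker.1 hc) j
    rw [hx]
    simpa [A, Fintype.linearCombination_apply, LinearMap.funLeft_apply] using this
  have h1 : stdForm p 2 x x ≤ 0 := by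
    have : stdForm p 2 x x = ∑ i, c i * (c i * stdForm p 2 (u i) (u i)) := by
      rw [hx]
      simp only [map_sum, LinearMap.sum_apply, map_smul, LinearMap.smul_apply, smul_eq_mul]
      refine Finset.sum_congr rfl fun i _ => ?_
      rw [Finset.sum_eq_single i]
      · intro j _ hj; rw [ho _ _ hj]; simp
      · simp
    rw [this]
    refine Finset.sum_nonpos fun i _ => ?_
    nlinarith [hq i, mul_self_nonneg (c i)]
  have h2 : stdForm p 2 x x = ∑ i : Fin p, x (Fin.castAdd 2 i) * x (Fin.castAdd 2 i) := by
    rw [stdForm_eq, Fin.sum_univ_add]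
    simp [hlast]
  have h3 : ∑ i : Fin p, x (Fin.castAdd 2 i) * x (Fin.castAdd 2 i) = 0 :=
    le_antisymm (h2 ▸ h1) (Finset.sum_nonneg fun i _ => mul_self_nonneg _)
  have h4 := (Finset.sum_eq_zero_iff_of_nonneg (fun i _ => mul_self_nonneg _)).1 h3
  have hx0 : x = 0 := by
    ext i
    refine Fin.addCases (fun i => ?_) (fun i => hlast i) i
    simpa using h4 i (Finset.mem_univ i)
  exact hc0 (funext (Fintype.linearIndependent_iff.1 hu c (hx ▸ hx0)))

/-- Existence of orthogonal triples. -/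
theorem exists_triple (p : ℕ) (hp : 3 ≤ p) (s t : SignType) :
    ∃ x y z : Fin (p + 2) → ℝ, LinearIndependent ℝ ![x, y, z] ∧
      stdForm p 2 x y = 0 ∧ stdForm p 2 x z = 0 ∧ stdForm p 2 y z = 0 ∧
      stdForm p 2 x x = 1 ∧ stdForm p 2 y y = s ∧ stdForm p 2 z z = t := by
  have hab : ∀ s : SignType, ∃ a b : ℝ, (a ≠ 0 ∨ b ≠ 0) ∧ a * a - b * b = s := by
    intro s
    rcases s with _ | _ | _
    · exact ⟨1, 1, by simp⟩
    · exact ⟨0, 1, by simp⟩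
    · exact ⟨1, 0, by simp⟩
  obtain ⟨a, b, h1, h2⟩ := hab s
  obtain ⟨c, d, h3, h4⟩ := hab t
  let e0 : Fin (p + 2) := ⟨0, by omega⟩
  let e1 : Fin (p + 2) := ⟨1, by omega⟩
  let e2 : Fin (p + 2) := ⟨2, by omega⟩
  let f0 : Fin (p + 2) := ⟨p, by omega⟩
  let f1 : Fin (p + 2) := ⟨p + 1, by omega⟩
  have l0 : (0 : ℕ) < p := by omega
  have l1 : (1 : ℕ) < p := by omega
  have l2 : (2 : ℕ) < p := by omega
  have n0 : p ≠ 0 := by omega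
  have n1 : p ≠ 1 := by omega
  have n2 : p ≠ 2 := by omega
  have m0 : (0 : ℕ) ≠ p := by omega
  have m1 : (1 : ℕ) ≠ p := by omega
  have m2 : (2 : ℕ) ≠ p := by omega
  have k1 : (1 : ℕ) ≠ p + 1 := by omega
  have k2 : (2 : ℕ) ≠ p + 1 := by omega
  have k3 : p + 1 ≠ 2 := by omega
  refine ⟨Pi.single e0 1, a • Pi.single e1 1 + b • Pi.single f0 1,
    c • Pi.single e2 1 + d • Pi.single f1 1, ?_, ?_, ?_, ?_, ?_, ?_, ?_⟩
  · rw [Fintype.linearIndependent_iff]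
    intro g hg
    have r0 := congrFun hg e0
    have r1 := congrFun hg e1
    have r2 := congrFun hg e2
    have r3 := congrFun hg f0
    have r4 := congrFun hg f1
    simp [Fin.sum_univ_three, Pi.single_apply, e0, e1, e2, f0, f1, Fin.ext_iff, *] at r0 r1 r2 r3 r4
    intro i
    fin_cases i
    · simpa using r0
    · simp; tauto
    · simp; tauto
  all_goals
    simp [std_single, Pi.single_apply, e0, e1, e2, f0, f1, Fin.ext_iff, *]
  · linarith
  · linarith

end Std

section Cls

abbrev Ty : Type :=
  {t : SignType × SignType × SignType // t.2.1 ≤ t.1 ∧ (t.1 = 1 ∨ t.2.2 = 1)} ⊕ SignType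

def dat : Ty → SignType × SignType × SignType × Bool
  | Sum.inl t => (t.1.1, t.1.2.1, t.1.2.2, false)
  | Sum.inr b => (0, b, 0, true)

def HasT (p : ℕ) (F : FlagPQ p 2) (d : SignType × SignType × SignType × Bool) : Prop :=
  ∃ u v l : Fin (p + 2) → ℝ, LinearIndependent ℝ ![u, v] ∧ stdForm p 2 u v = 0 ∧
    stdForm p 2 u l = 0 ∧ stdForm p 2 v l = 0 ∧ stdForm p 2 u u = (d.1 : ℝ) ∧
    stdForm p 2 v v = (d.2.1 : ℝ) ∧ stdForm p 2 l l = (d.2.2.1 : ℝ) ∧ l ≠ 0 ∧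
    (d.2.2.2 = true → l = u) ∧ (d.2.2.2 = false → l ∉ Submodule.span ℝ {u, v}) ∧
    F.1.1 = Submodule.span ℝ {l} ∧
    F.1.2 = LinearMap.BilinForm.orthogonal (stdForm p 2) (Submodule.span ℝ {u, v})

theorem map_span_single {V : Type*} [AddCommGroup V] [Module ℝ V] (g : V ≃ₗ[ℝ] V) (l : V) :
    (Submodule.span ℝ {l}).map g.toLinearMap = Submodule.span ℝ {g l} := by
  rw [Submodule.map_span]; simp

theorem map_span_pair' {V : Type*} [AddCommGroup V] [Module ℝ V] (g : V ≃ₗ[ℝ] V) (l m : V) :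
    (Submodule.span ℝ {l, m}).map g.toLinearMap = Submodule.span ℝ {g l, g m} := by
  rw [Submodule.map_span]; simp [Set.image_pair]

theorem hasT_transport (p : ℕ) (F G : FlagPQ p 2) (h : orbitRel p 2 F G) (d) (hG : HasT p G d) :
    HasT p F d := by
  obtain ⟨g, hg, h1, h2⟩ := h
  obtain ⟨u, v, l, a1, a2, a3, a4, a5, a6, a7, a8, a9, a10, a11, a12⟩ := hG
  refine ⟨g u, g v, g l, ?_, ?_, ?_, ?_, ?_, ?_, ?_, ?_, ?_, ?_, ?_, ?_⟩
  · apply li_pair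
    rw [← map_span_pair']
    exact (LinearEquiv.finrank_map_eq g _).trans (finrank_pair u v a1)
  · rw [hg, a2]
  · rw [hg, a3]
  · rw [hg, a4]
  · rw [hg, a5]
  · rw [hg, a6]
  · rw [hg, a7]
  · simpa using a8
  · intro hb; rw [a9 hb]
  · intro hb hm
    rw [← map_span_pair'] at hm
    obtain ⟨y, hy, hy'⟩ := hm
    exact a10 hb ((g.injective hy') ▸ hy)
  · rw [h1, a11, map_span_single]
  · rw [h2, a12, map_orth_pair _ g hg]

theorem li_triple {V : Type*} [AddCommGroup V] [Module ℝ V] (l u v : V)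
    (h : LinearIndependent ℝ ![u, v]) (hl : l ∉ Submodule.span ℝ {u, v}) :
    LinearIndependent ℝ ![l, u, v] := by
  refine linearIndependent_finCons.2 ⟨h, ?_⟩
  rw [range_pair]; exact hl

theorem hasT_same (p : ℕ) (F G : FlagPQ p 2) (d) (hF : HasT p F d) (hG : HasT p G d) :
    orbitRel p 2 F G := by
  obtain ⟨u, v, l, a1, a2, a3, a4, a5, a6, a7, a8, a9, a10, a11, a12⟩ := hG
  obtain ⟨u', v', l', b1, b2, b3, b4, b5, b6, b7, b8, b9, b10, b11, b12⟩ := hF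
  have s2 := (std_symm p 2 v u).trans a2
  have s3 := (std_symm p 2 l u).trans a3
  have s4 := (std_symm p 2 l v).trans a4
  have s2' := (std_symm p 2 v' u').trans b2
  have s3' := (std_symm p 2 l' u').trans b3
  have s4' := (std_symm p 2 l' v').trans b4
  obtain ⟨g, hg, hu, hv, hl⟩ : ∃ g : (Fin (p + 2) → ℝ) ≃ₗ[ℝ] (Fin (p + 2) → ℝ),
      Iso (stdForm p 2) g ∧ g u = u' ∧ g v = v' ∧ g l = l' := by
    cases hd : d.2.2.2
    · obtain ⟨g, hg, h⟩ := witt (std_symm p 2) (std_nondeg p 2) ![l, u, v] ![l', u', v']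
        (by intro i j hij; fin_cases i <;> fin_cases j <;> first | exact absurd rfl hij | assumption)
        (by intro i j hij; fin_cases i <;> fin_cases j <;> first | exact absurd rfl hij | assumption)
        (by
          intro i; fin_cases i
          · exact a7.trans b7.symm
          · exact a5.trans b5.symm
          · exact a6.trans b6.symm)
        (li_triple _ _ _ a1 (a10 hd)) (li_triple _ _ _ b1 (b10 hd))
      exact ⟨g, hg, h 1, h 2, h 0⟩
    · obtain ⟨g, hg, h⟩ := witt (std_symm p 2) (std_nondeg p 2) ![u, v] ![u', v']
        (by intro i j hij; fin_cases i <;> fin_cases j <;> first | exact absurd rfl hij | assumption)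
        (by intro i j hij; fin_cases i <;> fin_cases j <;> first | exact absurd rfl hij | assumption)
        (by
          intro i; fin_cases i
          · exact a5.trans b5.symm
          · exact a6.trans b6.symm)
        a1 b1
      refine ⟨g, hg, h 0, h 1, ?_⟩
      rw [a9 hd, b9 hd]; exact h 0
  refine ⟨g, hg, ?_, ?_⟩
  · rw [a11, b11, map_span_single, hl]
  · rw [a12, b12, map_orth_pair _ g hg, hu, hv]

theorem hasT_exists (p : ℕ) (F : FlagPQ p 2) : ∃ t : Ty, HasT p F (dat t) := by
  obtain ⟨⟨L, W⟩, hLW, hL, hW⟩ := F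
  simp only at hLW hL hW
  obtain ⟨U, hU⟩ : ∃ U, U = LinearMap.BilinForm.orthogonal (stdForm p 2) W := ⟨_, rfl⟩
  have hUW : LinearMap.BilinForm.orthogonal (stdForm p 2) U = W := by
    rw [hU, LinearMap.BilinForm.orthogonal_orthogonal (std_nd p 2) (std_refl p 2)]
  have hU2 : finrank ℝ U = 2 := by
    rw [hU, LinearMap.BilinForm.finrank_orthogonal (std_nd p 2), hW]
    simp
  obtain ⟨l, hl0, hl⟩ : ∃ l : Fin (p + 2) → ℝ, l ≠ 0 ∧ L = Submodule.span ℝ {l} := by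
    obtain ⟨⟨l, hl⟩, h0, h⟩ := finrank_eq_one_iff'.1 hL
    refine ⟨l, fun h' => h0 (Subtype.ext h'), le_antisymm ?_ ?_⟩
    · intro x hx
      obtain ⟨c, hc⟩ := h ⟨x, hx⟩
      exact Submodule.mem_span_singleton.2 ⟨c, congrArg Subtype.val hc⟩
    · rw [Submodule.span_singleton_le_iff_mem]; exact hl
  obtain ⟨c, hc, γ, hγ⟩ := exists_scale (stdForm p 2) l
  rw [← Submodule.span_singleton_smul_eq (IsUnit.mk0 c hc)] at hl
  have hm0 : c • l ≠ 0 := smul_ne_zero hc hl0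
  generalize c • l = m at hl hγ hm0
  have hmW : m ∈ W := hLW (hl ▸ Submodule.mem_span_singleton_self m)
  have hUm : ∀ x ∈ U, stdForm p 2 x m = 0 := by
    intro x hx
    rw [← hUW] at hmW
    exact hmW x hx
  by_cases hmU : m ∈ U
  · have hlt : Submodule.span ℝ {m} < U := by
      refine lt_of_le_of_ne ((Submodule.span_singleton_le_iff_mem _ _).2 hmU) ?_
      intro h
      rw [← h, finrank_span_singleton hm0] at hU2
      omega
    obtain ⟨w, hwU, hw⟩ := SetLike.exists_of_lt hlt
    obtain ⟨k, hk, b, hb⟩ := exists_scale (stdForm p 2) w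
    have hw' : k • w ∉ Submodule.span ℝ {m} := by
      rwa [Submodule.smul_mem_iff _ hk]
    have hwU' : k • w ∈ U := U.smul_mem k hwU
    generalize k • w = v at hb hw' hwU'
    have hli : LinearIndependent ℝ ![m, v] := by
      rw [LinearIndependent.pair_iff' hm0]
      intro a ha
      exact hw' (Submodule.mem_span_singleton.2 ⟨a, ha⟩)
    have hsp : Submodule.span ℝ {m, v} = U := by
      apply Submodule.eq_of_le_of_finrank_eq
      · rw [Submodule.span_le]
        rintro x (rfl | rfl)
        · exact hmU
        · exact hwU'
      · rw [finrank_pair _ _ hli, hU2]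
    have hmm := hUm m hmU
    refine ⟨Sum.inr b, m, v, m, hli, ?_, hmm, hUm v hwU', ?_, hb, ?_, hm0, fun _ => rfl, ?_, hl, ?_⟩
    · rw [std_symm]; exact hUm v hwU'
    · simp [dat, hmm]
    · simp [dat, hmm]
    · simp [dat]
    · rw [hsp, hUW]
  · obtain ⟨u, v, a, b, hab, hsp, huv, hu, hv⟩ := exists_normal (stdForm p 2) (std_isSymm p 2) U hU2
    have hli : LinearIndependent ℝ ![u, v] := li_pair _ _ (by rw [← hsp, hU2])
    have hum : stdForm p 2 u m = 0 := hUm u (hsp ▸ Submodule.subset_span (by simp))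
    have hvm : stdForm p 2 v m = 0 := hUm v (hsp ▸ Submodule.subset_span (by simp))
    have hmU' : m ∉ Submodule.span ℝ {u, v} := hsp ▸ hmU
    have s2 := (std_symm p 2 v u).trans huv
    have s3 := (std_symm p 2 m u).trans hum
    have s4 := (std_symm p 2 m v).trans hvm
    have hcond : a = 1 ∨ γ = 1 := by
      by_contra hcon
      push Not at hcon
      have key : ∀ s : SignType, s ≠ 1 → (s : ℝ) ≤ 0 := by
        intro s hs; rcases s with _ | _ | _
        · simp
        · simp
        · exact absurd rfl hs
      have hb1 : b ≠ 1 := by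
        rintro rfl
        have : ∀ a : SignType, 1 ≤ a → a = 1 := by decide
        exact hcon.1 (this a hab)
      refine no_nonpos p ![m, u, v] ?_ ?_ (li_triple _ _ _ hli hmU')
      · intro i j hij; fin_cases i <;> fin_cases j <;> first | exact absurd rfl hij | assumption
      · intro i; fin_cases i
        · exact hγ.le.trans (key _ hcon.2)
        · exact hu.le.trans (key _ hcon.1)
        · exact hv.le.trans (key _ hb1)
    refine ⟨Sum.inl ⟨(a, b, γ), hab, hcond⟩, u, v, m, hli, huv, hum, hvm, hu, hv, hγ, hm0, ?_,
      fun _ => hmU', hl, ?_⟩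
    · simp [dat]
    · rw [← hsp, hUW]

theorem exists_flag (p : ℕ) (u v l : Fin (p + 2) → ℝ) (h : LinearIndependent ℝ ![u, v])
    (hl : l ≠ 0) (h1 : stdForm p 2 u l = 0) (h2 : stdForm p 2 v l = 0) :
    ∃ F : FlagPQ p 2, F.1.1 = Submodule.span ℝ {l} ∧
    F.1.2 = LinearMap.BilinForm.orthogonal (stdForm p 2) (Submodule.span ℝ {u, v}) := by
  refine ⟨⟨(Submodule.span ℝ {l},
    LinearMap.BilinForm.orthogonal (stdForm p 2) (Submodule.span ℝ {u, v})), ?_, ?_, ?_⟩, rfl, rfl⟩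
  · refine (Submodule.span_singleton_le_iff_mem _ _).2 ?_
    exact (mem_orth_pair _ _ _ _).2 ⟨h1, h2⟩
  · exact finrank_span_singleton hl
  · rw [LinearMap.BilinForm.finrank_orthogonal (std_nd p 2), finrank_pair _ _ h]
    simp

theorem hasT_surj (p : ℕ) (hp : 3 ≤ p) (t : Ty) : ∃ F, HasT p F (dat t) := by
  have fin3 : ∀ x y z : Fin (p + 2) → ℝ, LinearIndependent ℝ ![x, y, z] →
      LinearIndependent ℝ ![y, z] ∧ x ∉ Submodule.span ℝ {y, z} := by
    intro x y z h
    have := linearIndependent_finCons.1 h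
    rw [range_pair] at this
    exact this
  rcases t with ⟨⟨a, b, c⟩, hab, hac⟩ | b
  · obtain ⟨u, v, l, hli, huv, hul, hvl, hu, hv, hl⟩ : ∃ u v l : Fin (p + 2) → ℝ,
        LinearIndependent ℝ ![l, u, v] ∧ stdForm p 2 u v = 0 ∧ stdForm p 2 u l = 0 ∧
        stdForm p 2 v l = 0 ∧ stdForm p 2 u u = a ∧ stdForm p 2 v v = b ∧
        stdForm p 2 l l = c := by
      rcases hac with h | h
      · simp only at h
        obtain ⟨x, y, z, h1, h2, h3, h4, h5, h6, h7⟩ := exists_triple p hp b c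
        refine ⟨x, y, z, ?_, h2, h3, h4, by rw [h, h5]; simp, h6, h7⟩
        have h8 := h1.comp ![2, 0, 1] (by decide)
        convert h8 using 1
        ext i j; fin_cases i <;> rfl
      · simp only at h
        obtain ⟨x, y, z, h1, h2, h3, h4, h5, h6, h7⟩ := exists_triple p hp a b
        refine ⟨y, z, x, h1, h4, ?_, ?_, h6, h7, by rw [h, h5]; simp⟩
        · rw [std_symm]; exact h2
        · rw [std_symm]; exact h3
    obtain ⟨h1, h2⟩ := fin3 _ _ _ hli
    have hl0 : l ≠ 0 := by rintro rfl; exact h2 (Submodule.zero_mem _)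
    obtain ⟨F, hF1, hF2⟩ := exists_flag p u v l h1 hl0 hul hvl
    exact ⟨F, u, v, l, h1, huv, hul, hvl, hu, hv, hl, hl0, by simp [dat], fun _ => h2, hF1, hF2⟩
  · obtain ⟨x, u, v, h1, h2, h3, h4, h5, h6, h7⟩ := exists_triple p hp 0 b
    have h8 := (fin3 _ _ _ h1).1
    have hu0 : u ≠ 0 := h8.ne_zero 0
    have h6' : stdForm p 2 u u = 0 := by simpa using h6
    have h4' : stdForm p 2 v u = 0 := by rw [std_symm]; exact h4
    obtain ⟨F, hF1, hF2⟩ := exists_flag p u v u h8 hu0 h6' h4'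
    exact ⟨F, u, v, u, h8, h4, h6', h4', h6, h7, h6, hu0, fun _ => rfl, by simp [dat], hF1, hF2⟩

theorem hasT_inv (p : ℕ) (F : FlagPQ p 2) (d) (hF : HasT p F d) :
    ((∃ x ∈ LinearMap.BilinForm.orthogonal (stdForm p 2) F.1.2, 0 < stdForm p 2 x x) ↔
      (d.1 = 1 ∨ d.2.1 = 1)) ∧
    ((∃ x ∈ LinearMap.BilinForm.orthogonal (stdForm p 2) F.1.2, stdForm p 2 x x < 0) ↔
      (d.1 = -1 ∨ d.2.1 = -1)) ∧
    ((∃ x ∈ LinearMap.BilinForm.orthogonal (stdForm p 2) F.1.2, x ≠ 0 ∧ x ∈ F.1.2) ↔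
      (d.1 = 0 ∨ d.2.1 = 0)) ∧
    ((∃ x ∈ F.1.1, 0 < stdForm p 2 x x) ↔ d.2.2.1 = 1) ∧
    ((∃ x ∈ F.1.1, stdForm p 2 x x < 0) ↔ d.2.2.1 = -1) ∧
    (F.1.1 ≤ LinearMap.BilinForm.orthogonal (stdForm p 2) F.1.2 ↔ d.2.2.2 = true) := by
  obtain ⟨u, v, l, a1, a2, a3, a4, a5, a6, a7, a8, a9, a10, a11, a12⟩ := hF
  obtain ⟨a, b, c, β⟩ := d
  simp only at a5 a6 a7 a9 a10 ⊢
  rw [a11, a12, LinearMap.BilinForm.orthogonal_orthogonal (std_nd p 2) (std_refl p 2)]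
  have s2 := (std_symm p 2 v u).trans a2
  have hq : ∀ α β : ℝ, stdForm p 2 (α • u + β • v) (α • u + β • v) = α ^ 2 * a + β ^ 2 * b := by
    intro α β
    simp only [map_add, map_smul, LinearMap.add_apply, LinearMap.smul_apply, smul_eq_mul,
      a2, s2, a5, a6]
    ring
  have hql : ∀ α : ℝ, stdForm p 2 (α • l) (α • l) = α ^ 2 * c := by
    intro α
    simp only [map_smul, LinearMap.smul_apply, smul_eq_mul, a7]
    ring
  have hu : u ∈ Submodule.span ℝ {u, v} := Submodule.subset_span (by simp)
  have hv : v ∈ Submodule.span ℝ {u, v} := Submodule.subset_span (by simp)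
  have hll := Submodule.mem_span_singleton_self (R := ℝ) l
  have kpos : ∀ s : SignType, s ≠ 1 → (s : ℝ) ≤ 0 := by
    intro s hs; rcases s with _ | _ | _
    · simp
    · simp
    · exact absurd rfl hs
  have kneg : ∀ s : SignType, s ≠ -1 → 0 ≤ (s : ℝ) := by
    intro s hs; rcases s with _ | _ | _
    · simp
    · exact absurd rfl hs
    · simp
  have kz : ∀ s : SignType, (s : ℝ) = 0 → s = 0 := by
    intro s hs; rcases s with _ | _ | _
    · rfl
    · simp at hs
    · simp at hs
  refine ⟨⟨?_, ?_⟩, ⟨?_, ?_⟩, ⟨?_, ?_⟩, ⟨?_, ?_⟩, ⟨?_, ?_⟩, ⟨?_, ?_⟩⟩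
  · rintro ⟨x, hx, h⟩
    obtain ⟨α, β, rfl⟩ := Submodule.mem_span_pair.1 hx
    rw [hq] at h
    by_contra hcon
    push Not at hcon
    nlinarith [mul_nonneg (sq_nonneg α) (neg_nonneg.2 (kpos _ hcon.1)),
      mul_nonneg (sq_nonneg β) (neg_nonneg.2 (kpos _ hcon.2))]
  · rintro (rfl | rfl)
    · exact ⟨u, hu, by rw [a5]; simp⟩
    · exact ⟨v, hv, by rw [a6]; simp⟩
  · rintro ⟨x, hx, h⟩
    obtain ⟨α, β, rfl⟩ := Submodule.mem_span_pair.1 hx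
    rw [hq] at h
    by_contra hcon
    push Not at hcon
    nlinarith [mul_nonneg (sq_nonneg α) (kneg _ hcon.1),
      mul_nonneg (sq_nonneg β) (kneg _ hcon.2)]
  · rintro (rfl | rfl)
    · exact ⟨u, hu, by rw [a5]; simp⟩
    · exact ⟨v, hv, by rw [a6]; simp⟩
  · rintro ⟨x, hx, h0, h⟩
    rw [mem_orth_pair] at h
    obtain ⟨α, β, rfl⟩ := Submodule.mem_span_pair.1 hx
    simp only [map_add, map_smul, smul_eq_mul, a2, s2, a5, a6, mul_zero, add_zero, zero_add,
      mul_eq_zero] at h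
    by_contra hcon
    push Not at hcon
    have h1 := h.1.resolve_right (fun h' => hcon.1 (kz _ h'))
    have h2 := h.2.resolve_right (fun h' => hcon.2 (kz _ h'))
    apply h0
    simp [h1, h2]
  · rintro (rfl | rfl)
    · refine ⟨u, hu, a1.ne_zero 0, (mem_orth_pair _ _ _ _).2 ⟨?_, s2⟩⟩
      rw [a5]; simp
    · refine ⟨v, hv, a1.ne_zero 1, (mem_orth_pair _ _ _ _).2 ⟨a2, ?_⟩⟩
      rw [a6]; simp
  · rintro ⟨x, hx, h⟩
    obtain ⟨α, rfl⟩ := Submodule.mem_span_singleton.1 hx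
    rw [hql] at h
    by_contra hcon
    nlinarith [mul_nonneg (sq_nonneg α) (neg_nonneg.2 (kpos _ hcon))]
  · rintro rfl
    exact ⟨l, hll, by rw [a7]; simp⟩
  · rintro ⟨x, hx, h⟩
    obtain ⟨α, rfl⟩ := Submodule.mem_span_singleton.1 hx
    rw [hql] at h
    by_contra hcon
    nlinarith [mul_nonneg (sq_nonneg α) (kneg _ hcon)]
  · rintro rfl
    exact ⟨l, hll, by rw [a7]; simp⟩
  · intro h
    by_contra hcon
    exact a10 (by simpa using hcon) (h hll)
  · intro h
    rw [Submodule.span_singleton_le_iff_mem, a9 h]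
    exact hu

def key (d : SignType × SignType × SignType × Bool) : Bool × Bool × Bool × Bool × Bool × Bool :=
  (decide (d.1 = 1 ∨ d.2.1 = 1), decide (d.1 = -1 ∨ d.2.1 = -1), decide (d.1 = 0 ∨ d.2.1 = 0),
    decide (d.2.2.1 = 1), decide (d.2.2.1 = -1), d.2.2.2)

instance : DecidableEq Ty := instDecidableEqSum

instance (d d' : SignType × SignType × SignType × Bool) : Decidable (key d = key d') :=
  instDecidableEqProd _ _

theorem key_inj : ∀ t t' : Ty, key (dat t) = key (dat t') → t = t' := by
  decide +kernel

theorem dat_inj : ∀ t t' : Ty,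
    (((dat t).1 = 1 ∨ (dat t).2.1 = 1) ↔ ((dat t').1 = 1 ∨ (dat t').2.1 = 1)) →
    (((dat t).1 = -1 ∨ (dat t).2.1 = -1) ↔ ((dat t').1 = -1 ∨ (dat t').2.1 = -1)) →
    (((dat t).1 = 0 ∨ (dat t).2.1 = 0) ↔ ((dat t').1 = 0 ∨ (dat t').2.1 = 0)) →
    ((dat t).2.2.1 = 1 ↔ (dat t').2.2.1 = 1) → ((dat t).2.2.1 = -1 ↔ (dat t').2.2.1 = -1) →
    ((dat t).2.2.2 = true ↔ (dat t').2.2.2 = true) → t = t' := by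
  intro t t' h1 h2 h3 h4 h5 h6
  apply key_inj
  simp only [key, Prod.mk.injEq, decide_eq_decide]
  exact ⟨h1, h2, h3, h4, h5, Bool.eq_iff_iff.2 h6⟩

theorem hasT_unique (p : ℕ) (F : FlagPQ p 2) (t t' : Ty) (h : HasT p F (dat t))
    (h' : HasT p F (dat t')) : t = t' := by
  obtain ⟨a1, a2, a3, a4, a5, a6⟩ := hasT_inv p F _ h
  obtain ⟨b1, b2, b3, b4, b5, b6⟩ := hasT_inv p F _ h'
  exact dat_inj t t' (a1.symm.trans b1) (a2.symm.trans b2) (a3.symm.trans b3) (a4.symm.trans b4)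
    (a5.symm.trans b5) (a6.symm.trans b6)

theorem card_Ty : Nat.card Ty = 15 := by
  rw [Nat.card_eq_fintype_card]
  decide +kernel

end Cls

/-- If `p ≥ 3` and `q = 2`, the action of `O(p,q)` on the flag manifold `F_{1, p+q-2}`
has exactly 15 orbits. -/
theorem orbit_count_of_q_eq_two (p : ℕ) (hp : 3 ≤ p) :
    Nat.card (Quot (orbitRel p 2)) = 15 := by
  classical
  choose ty hty using hasT_exists p
  have hf : ∀ F G : FlagPQ p 2, orbitRel p 2 F G → ty F = ty G := fun F G h =>
    hasT_unique p F _ _ (hty F) (hasT_transport p F G h _ (hty G))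
  rw [← card_Ty]
  refine Nat.card_congr (Equiv.ofBijective (Quot.lift ty hf) ⟨?_, ?_⟩)
  · rintro ⟨F⟩ ⟨G⟩ h
    have h' : ty F = ty G := h
    exact Quot.sound (hasT_same p F G _ (hty F) (h' ▸ hty G))
  · intro t
    obtain ⟨F, hF⟩ := hasT_surj p hp t
    exact ⟨Quot.mk _ F, hasT_unique p F _ _ (hty F) hF⟩
end
end

section
/- Let p, q ≥ 1 and 1 ≤ k₁ < k₂ ≤ p+q. For any two flags (V_{k₁}, V_{k₂}) and (W_{k₁}, W_{k₂}) in F_{k₁,k₂}, the following are equivalent: (1) there exists g ∈ O(p,q) such that V_{k₁} = gW_{k₁} and V_{k₂} = gW_{k₂}; (2) sign(V_{k₂}) = sign(W_{k₂}), sign(V_{k₁}) = sign(W_{k₁}), and dim(V_{k₁} ∩ rad(V_{k₂})) = dim(W_{k₁} ∩ rad(W_{k₂})), where signatures and radicals are taken with respect to ⟨·,·⟩₀. -/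
open Module

noncomputable section

section Witt
open LinearMap
variable {E : Type*} [AddCommGroup E] [Module ℝ E]

lemma exists_dual_vec [FiniteDimensional ℝ E] (B : LinearMap.BilinForm ℝ E)
    (hB : ∀ x y, B x y = B y x) (X : Submodule ℝ E) (hX : LinearMap.ker B ≤ X) (w : E)
    (hw : w ∉ X) : ∃ v, (∀ x ∈ X, B x v = 0) ∧ B w v = 1 := by
  obtain ⟨l, hl, hlX⟩ := Submodule.exists_le_ker_of_notMem hw
  have hr : LinearMap.range B = (LinearMap.ker B).dualAnnihilator := by
    apply Submodule.eq_of_le_of_finrank_eq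
    · rintro _ ⟨v, rfl⟩
      rw [Submodule.mem_dualAnnihilator]
      intro x hx
      rw [hB, LinearMap.mem_ker.1 hx]; rfl
    · have h1 := LinearMap.finrank_range_add_finrank_ker B
      have h2 := Subspace.finrank_add_finrank_dualAnnihilator_eq (LinearMap.ker B)
      exact Nat.add_left_cancel ((Nat.add_comm _ _).trans (h1.trans h2.symm))
  have hl2 : l ∈ LinearMap.range B := by
    rw [hr, Submodule.mem_dualAnnihilator]
    intro x hx
    exact hlX (hX hx)
  obtain ⟨v, rfl⟩ := hl2
  refine ⟨(B v w)⁻¹ • v, ?_, ?_⟩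
  · intro x hx
    have := hlX hx
    rw [LinearMap.mem_ker, hB] at this
    simp [this]
  · rw [map_smul, hB w v, smul_eq_mul, inv_mul_cancel₀ hl]

/-- An isometric endomorphism that fixes the kernel is invertible. -/
lemma isom_equiv [FiniteDimensional ℝ E] (B : LinearMap.BilinForm ℝ E) (g : E →ₗ[ℝ] E)
    (hg : ∀ x y, B (g x) (g y) = B x y) (hk : ∀ x, B x = 0 → g x = 0 → x = 0) :
    ∃ e : E ≃ₗ[ℝ] E, ∀ x, e x = g x := by
  have hinj : Function.Injective g := by
    rw [← LinearMap.ker_eq_bot, LinearMap.ker_eq_bot']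
    intro x hx
    refine hk x ?_ hx
    ext y
    rw [← hg, hx]; simp
  exact ⟨LinearEquiv.ofInjectiveEndo g hinj, fun x => rfl⟩

lemma witt_step [FiniteDimensional ℝ E] (B : LinearMap.BilinForm ℝ E)
    (hB : ∀ x y, B x y = B y x) (H : Submodule ℝ E) (w u : E)
    (hH : ∀ h ∈ H, B u h = 0) (hww : B (w + u) (w + u) = B w w)
    (hw : w ∉ H) (hw' : w + u ∉ H)
    (hk : ∀ h ∈ H, w + h ∈ LinearMap.ker B ↔ w + u + h ∈ LinearMap.ker B) :
    ∃ g : E ≃ₗ[ℝ] E, (∀ x y, B (g x) (g y) = B x y) ∧ (∀ h ∈ H, g h = h) ∧ g w = w + u := by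
  have hww2 : 2 * B w u + B u u = 0 := by
    have := hww
    simp only [map_add, LinearMap.add_apply] at this
    rw [hB u w] at this; linarith
  have hk0 : ∀ x, B x = 0 → ∀ y, B x y = 0 := fun x hx y => by rw [hx]; rfl
  by_cases huR : u ∈ LinearMap.ker B
  · -- transvection
    have huy : ∀ y, B u y = 0 := hk0 u huR
    have hyu : ∀ y, B y u = 0 := fun y => by rw [hB, huy]
    obtain ⟨l, hlH, hlw, hlu⟩ : ∃ l : E →ₗ[ℝ] ℝ, (∀ h ∈ H, l h = 0) ∧ l w = 1 ∧ 1 + l u ≠ 0 := by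
      obtain ⟨l1, h1, h1H⟩ := Submodule.exists_le_ker_of_notMem hw
      by_cases hc : l1 (w + u) = 0
      · obtain ⟨l2, h2, h2H⟩ := Submodule.exists_le_ker_of_notMem hw'
        by_cases hc2 : l2 w = 0
        · refine ⟨(l1 w)⁻¹ • l1 + l2, fun h hh => ?_, ?_, ?_⟩
          · have e1 : l1 h = 0 := h1H hh
            have e2 : l2 h = 0 := h2H hh
            simp [e1, e2]
          · simp [hc2, h1]
          · rw [map_add] at hc h2
            have : l1 u = - l1 w := by linarith
            simp only [LinearMap.add_apply, LinearMap.smul_apply, this, smul_eq_mul]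
            have : (l1 w)⁻¹ * - l1 w = -1 := by field_simp
            rw [this]
            rw [hc2] at h2
            intro h; apply h2; linarith
        · refine ⟨(l2 w)⁻¹ • l2, fun h hh => ?_, ?_, ?_⟩
          · have e2 : l2 h = 0 := h2H hh
            simp [e2]
          · simp [hc2]
          · rw [map_add] at h2
            simp only [LinearMap.smul_apply, smul_eq_mul]
            intro h; apply h2; field_simp at h; linarith
      · refine ⟨(l1 w)⁻¹ • l1, fun h hh => ?_, ?_, ?_⟩
        · have e2 : l1 h = 0 := h1H hh
          simp [e2]
        · simp [h1]
        · rw [map_add] at hc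
          simp only [LinearMap.smul_apply, smul_eq_mul]
          intro h; apply hc; field_simp at h; linarith
    let g : E →ₗ[ℝ] E := LinearMap.id + l.smulRight u
    have hgx : ∀ x, g x = x + l x • u := fun x => rfl
    have hgi : ∀ x y, B (g x) (g y) = B x y := by
      intro x y; simp [hgx, huy, hyu]
    obtain ⟨e, he⟩ := isom_equiv B g hgi (by
      intro x _ hx
      rw [hgx] at hx
      have h1 : l x * (1 + l u) = 0 := by
        have := congrArg l hx
        simp at this; linarith
      have h2 : l x = 0 := by
        rcases mul_eq_zero.1 h1 with h | h
        · exact h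
        · exact absurd h hlu
      simpa [h2] using hx)
    refine ⟨e, fun x y => by rw [he, he, hgi], fun h hh => ?_, ?_⟩
    · rw [he, hgx, hlH h hh]; simp
    · rw [he, hgx, hlw]; simp
  by_cases hq : B u u = 0
  · have hwu : B w u = 0 := by linarith
    have huw : B u w = 0 := by rw [hB, hwu]
    by_cases hX : w ∈ H ⊔ LinearMap.ker B ⊔ ℝ ∙ u
    · obtain ⟨z, hz, cu, hcu, rfl⟩ := Submodule.mem_sup.1 hX
      obtain ⟨h, hh, r, hr, rfl⟩ := Submodule.mem_sup.1 hz
      obtain ⟨c, rfl⟩ := Submodule.mem_span_singleton.1 hcu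
      -- key fact
      have key : ∀ h' ∈ H, h + r + c • u + h' ∉ LinearMap.ker B := by
        intro h' hh' hc
        apply huR
        have h2 := (hk h' hh').1 hc
        have := Submodule.sub_mem _ h2 hc
        convert this using 1; abel
      have hc0 : c ≠ 0 := by
        rintro rfl
        apply key (-h) (H.neg_mem hh)
        convert hr using 1; simp
      have hc1 : c + 1 ≠ 0 := by
        intro hc
        apply key (-h) (H.neg_mem hh)
        rw [hk _ (H.neg_mem hh)]
        convert hr using 1
        have : c = -1 := by linarith
        subst this; simp; 
      have huX : u ∉ H ⊔ LinearMap.ker B := by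
        intro hu
        obtain ⟨h', hh', r', hr', hu'⟩ := Submodule.mem_sup.1 hu
        apply key (-h - c • h') (H.sub_mem (H.neg_mem hh) (H.smul_mem c hh'))
        have : r + c • r' ∈ LinearMap.ker B :=
          Submodule.add_mem _ hr (Submodule.smul_mem _ c hr')
        convert this using 1
        rw [← hu']; simp only [smul_add]; abel
      obtain ⟨v0, hv0, hv01⟩ := exists_dual_vec B hB _ le_sup_right u huX
      obtain ⟨v, hvX, huv, hvv⟩ : ∃ v, (∀ x ∈ H ⊔ LinearMap.ker B, B x v = 0) ∧ B u v = 1 ∧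
          B v v = 0 := by
        refine ⟨v0 - (B v0 v0 / 2) • u, fun x hx => ?_, ?_, ?_⟩
        · have hxu : B x u = 0 := by
            obtain ⟨h', hh', r', hr', rfl⟩ := Submodule.mem_sup.1 hx
            rw [map_add, LinearMap.add_apply, hk0 r' hr', hB, hH h' hh', add_zero]
          simp [hv0 x hx, hxu]
        · simp [hv01, hq]
        · simp [hv01, hq, hB v0 u]; ring
      have hvu : B v u = 1 := by rw [hB, huv]
      set m : ℝ := (c + 1) / c with hm
      have hm0 : m ≠ 0 := div_ne_zero hc1 hc0
      let g : E →ₗ[ℝ] E := LinearMap.id + (B v).smulRight ((m - 1) • u)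
        + (B u).smulRight ((m⁻¹ - 1) • v)
      have hgx : ∀ x, g x = x + B v x • (m - 1) • u + B u x • (m⁻¹ - 1) • v := fun x => rfl
      have hgi : ∀ x y, B (g x) (g y) = B x y := by
        intro x y
        simp only [hgx, map_add, map_smul, LinearMap.add_apply, LinearMap.smul_apply, smul_eq_mul,
          hq, hvv, huv, hvu, hB x u, hB x v]
        field_simp; ring
      have hfix : ∀ x ∈ H ⊔ LinearMap.ker B, g x = x := by
        intro x hx
        have hxu : B u x = 0 := by
            obtain ⟨h', hh', r', hr', rfl⟩ := Submodule.mem_sup.1 hx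
            rw [map_add, hB u r', hk0 r' hr', hH h' hh', add_zero]
        rw [hgx, hB v x, hvX x hx, hxu]; simp
      obtain ⟨e, he⟩ := isom_equiv B g hgi (by
        intro x hx h0
        rwa [hfix x (Submodule.mem_sup_right hx)] at h0)
      refine ⟨e, fun x y => by rw [he, he, hgi], fun h hh => ?_, ?_⟩
      · rw [he, hfix h (Submodule.mem_sup_left hh)]
      · have e1 : h + r + c • u + u = h + r + (c + 1) • u := by rw [add_smul, one_smul]; abel
        have e2 : g u = m • u := by
          rw [hgx u, hvu, hq, one_smul, zero_smul, add_zero, sub_smul, one_smul]; abel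
        rw [he, map_add, hfix _ hz, map_smul, e1, e2, smul_smul, hm, mul_div_cancel₀ _ hc0]
    · -- Eichler
      obtain ⟨v, hvX, hwv⟩ := exists_dual_vec B hB _
        (le_sup_of_le_left le_sup_right) w hX
      have huv : B u v = 0 :=
        hvX u (Submodule.mem_sup_right (Submodule.mem_span_singleton_self u))
      have hvu : B v u = 0 := by rw [hB, huv]
      let g : E →ₗ[ℝ] E := LinearMap.id + (B v).smulRight u - (B u).smulRight v
        - (B u).smulRight ((B v v / 2) • u)
      have hgx : ∀ x, g x = x + B v x • u - B u x • v - B u x • (B v v / 2) • u := fun x => rfl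
      have hgi : ∀ x y, B (g x) (g y) = B x y := by
        intro x y
        simp only [hgx, map_add, map_sub, map_smul, LinearMap.add_apply, LinearMap.sub_apply,
          LinearMap.smul_apply, smul_eq_mul, hq, huv, hvu, hB x u, hB x v]
        ring
      have hfix : ∀ x ∈ H ⊔ LinearMap.ker B, g x = x := by
        intro x hx
        have hxu : B u x = 0 := by
            obtain ⟨h', hh', r', hr', rfl⟩ := Submodule.mem_sup.1 hx
            rw [map_add, hB u r', hk0 r' hr', hH h' hh', add_zero]
        rw [hgx, hB v x, hvX x (Submodule.mem_sup_left hx), hxu]; simp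
      obtain ⟨e, he⟩ := isom_equiv B g hgi (by
        intro x hx h0
        rwa [hfix x (Submodule.mem_sup_right hx)] at h0)
      refine ⟨e, fun x y => by rw [he, he, hgi], fun h hh => ?_, ?_⟩
      · rw [he, hfix h (Submodule.mem_sup_left hh)]
      · rw [he, hgx, hB v w, hwv, huw]; simp
  · -- reflection
    let g : E →ₗ[ℝ] E := LinearMap.id - (B u).smulRight ((2 / B u u) • u)
    have hgx : ∀ x, g x = x - B u x • (2 / B u u) • u := fun x => rfl
    have hgi : ∀ x y, B (g x) (g y) = B x y := by
      intro x y
      simp only [hgx, map_sub, map_smul, LinearMap.sub_apply,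
        LinearMap.smul_apply, smul_eq_mul, hB x u]
      field_simp; ring
    obtain ⟨e, he⟩ := isom_equiv B g hgi (by
      intro x hx h0
      rw [hgx, hB u x, hk0 x hx] at h0
      simpa using h0)
    refine ⟨e, fun x y => by rw [he, he, hgi], fun h hh => ?_, ?_⟩
    · rw [he, hgx, hH h hh]; simp
    · rw [he, hgx, hB u w]
      have : B w u = - B u u / 2 := by linarith
      rw [this, smul_smul]
      have : - B u u / 2 * (2 / B u u) = -1 := by field_simp
      rw [this]; simp

lemma witt_span [FiniteDimensional ℝ E] {T : Type*} [AddCommGroup T] [Module ℝ T]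
    (B : LinearMap.BilinForm ℝ E)
    (hB : ∀ x y, B x y = B y x) (i f : T →ₗ[ℝ] E) (hi : Function.Injective i)
    (hf : Function.Injective f) (hif : ∀ x y, B (i x) (i y) = B (f x) (f y))
    (hk : ∀ x, i x ∈ LinearMap.ker B ↔ f x ∈ LinearMap.ker B) (s : Finset T) :
    ∃ g : E ≃ₗ[ℝ] E, (∀ x y, B (g x) (g y) = B x y) ∧
      ∀ t ∈ Submodule.span ℝ (s : Set T), g (i t) = f t := by
  classical
  induction s using Finset.induction_on with
  | empty =>
    refine ⟨LinearEquiv.refl ℝ E, fun _ _ => rfl, fun t ht => ?_⟩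
    have : t = 0 := by simpa using ht
    simp [this]
  | insert a s _ ih =>
    obtain ⟨g, hg, hgs⟩ := ih
    by_cases ha : a ∈ Submodule.span ℝ (s : Set T)
    · refine ⟨g, hg, fun t ht => hgs t ?_⟩
      rwa [Finset.coe_insert, Submodule.span_insert_eq_span ha] at ht
    · have hg' : ∀ x y, B (g.symm x) (g.symm y) = B x y := fun x y => by
        rw [← hg]; simp
      have hkg : ∀ x, g.symm x ∈ LinearMap.ker B ↔ x ∈ LinearMap.ker B := by
        intro x
        simp only [LinearMap.mem_ker]
        constructor
        · intro h; ext y; rw [← hg', h]; simp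
        · intro h; ext y; rw [← hg, g.apply_symm_apply, h]; simp
      have hgs' : ∀ t ∈ Submodule.span ℝ (s : Set T), g.symm (f t) = i t := fun t ht => by
        rw [← hgs t ht]; simp
      have hwu : i a + (g.symm (f a) - i a) = g.symm (f a) := by abel
      obtain ⟨k, hkB, hkH, hka⟩ := witt_step B hB
        ((Submodule.span ℝ (s : Set T)).map i) (i a) (g.symm (f a) - i a)
        (by
          rintro _ ⟨t, ht, rfl⟩
          rw [map_sub, LinearMap.sub_apply, hif, ← hgs' t ht, hg', sub_self])
        (by rw [hwu, hg', hif])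
        (by
          rintro ⟨t, ht, h⟩
          exact ha (hi h ▸ ht))
        (by
          rw [hwu]
          rintro ⟨t, ht, h⟩
          rw [← hgs' t ht] at h
          exact ha (hf (g.symm.injective h) ▸ ht))
        (by
          rintro _ ⟨t, ht, rfl⟩
          rw [hwu, ← map_add, hk, ← hgs' t ht, ← map_add, ← map_add, hkg])
      refine ⟨k.trans g, fun x y => by simp [hg, hkB], fun t ht => ?_⟩
      rw [Finset.coe_insert, Submodule.mem_span_insert] at ht
      obtain ⟨c, z, hz, rfl⟩ := ht
      have h1 : k (i z) = i z := hkH _ ⟨z, hz, rfl⟩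
      rw [hwu] at hka
      simp [h1, hka, hgs z hz]

lemma witt_two [FiniteDimensional ℝ E] {T E' : Type*} [AddCommGroup T] [Module ℝ T]
    [FiniteDimensional ℝ T] [AddCommGroup E'] [Module ℝ E']
    (B : LinearMap.BilinForm ℝ E) (B' : LinearMap.BilinForm ℝ E')
    (hB : ∀ x y, B x y = B y x) (e : E ≃ₗ[ℝ] E') (he : ∀ x y, B' (e x) (e y) = B x y)
    (i : T →ₗ[ℝ] E) (f : T →ₗ[ℝ] E') (hi : Function.Injective i)
    (hf : Function.Injective f) (hif : ∀ x y, B (i x) (i y) = B' (f x) (f y))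
    (hk : ∀ x, (∀ y, B (i x) y = 0) ↔ ∀ y, B' (f x) y = 0) :
    ∃ g : E ≃ₗ[ℝ] E', (∀ x y, B' (g x) (g y) = B x y) ∧ ∀ t, g (i t) = f t := by
  have he' : ∀ x y, B (e.symm x) (e.symm y) = B' x y := fun x y => by rw [← he]; simp
  obtain ⟨s, hs⟩ := (Module.finite_def (R := ℝ) (M := T)).1 inferInstance
  obtain ⟨g, hg, hgs⟩ := witt_span B hB i (e.symm.toLinearMap ∘ₗ f) hi
    (e.symm.injective.comp hf) (fun x y => by simp [he', hif]) (by
      intro x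
      have h1 : i x ∈ LinearMap.ker B ↔ ∀ y, B (i x) y = 0 := by
        rw [LinearMap.mem_ker, LinearMap.ext_iff]; rfl
      have h2 : e.symm (f x) ∈ LinearMap.ker B ↔ ∀ y, B' (f x) y = 0 := by
        rw [LinearMap.mem_ker, LinearMap.ext_iff, e.forall_congr_left]
        simp [he']
      rw [h1, hk, ← h2]; rfl) s
  refine ⟨g.trans e, fun x y => by simp [he, hg], fun t => ?_⟩
  have := hgs t (by rw [hs]; trivial)
  simp [this]

end Witt

section Sylv
open QuadraticMap QuadraticForm

lemma exists_perm {n m : ℕ} (w : Fin n → SignType) (w' : Fin m → SignType) (h : n = m)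
    (hp : {i | w i = 1}.ncard = {i | w' i = 1}.ncard)
    (hn : {i | w i = -1}.ncard = {i | w' i = -1}.ncard) :
    ∃ σ : Fin n ≃ Fin m, ∀ i, w' (σ i) = w i := by
  classical
  have tot : ∀ {k : ℕ} (v : Fin k → SignType),
      {i | v i = 1}.ncard + {i | v i = -1}.ncard + {i | v i = 0}.ncard = k := by
    intro k v
    have := Finset.card_eq_sum_card_fiberwise (f := v) (s := Finset.univ) (t := Finset.univ)
      (fun _ _ => by simp)
    have hu : (Finset.univ : Finset SignType) = {0, -1, 1} := rfl
    rw [hu] at this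
    simp at this
    simp only [Set.ncard_eq_toFinset_card', Set.toFinset_ofPred]
    omega
  have t1 := tot w
  have t2 := tot w'
  have hc : ∀ c, Nonempty ({a // w a = c} ≃ {b // w' b = c}) := by
    intro c
    rw [← Fintype.card_eq, ← Nat.card_eq_fintype_card, ← Nat.card_eq_fintype_card]
    change {i | w i = c}.ncard = {i | w' i = c}.ncard
    cases c
    · change {i | w i = 0}.ncard = {i | w' i = 0}.ncard
      omega
    · exact hn
    · exact hp
  exact ⟨Equiv.ofFiberEquiv (fun c => (hc c).some), fun i => Equiv.ofFiberEquiv_map _ _⟩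

lemma equivalent_of_sig {M M' : Type*} [AddCommGroup M] [Module ℝ M] [FiniteDimensional ℝ M]
    [AddCommGroup M'] [Module ℝ M'] [FiniteDimensional ℝ M']
    (Q : QuadraticForm ℝ M) (Q' : QuadraticForm ℝ M') (hd : finrank ℝ M = finrank ℝ M')
    (hp : sigPos Q = sigPos Q') (hn : sigNeg Q = sigNeg Q') : Equivalent Q Q' := by
  obtain ⟨w, hw⟩ := Q.equivalent_signType_weighted_sum_squared
  obtain ⟨w', hw'⟩ := Q'.equivalent_signType_weighted_sum_squared
  rw [sigPos_of_equiv_weightedSumSquares hw, sigPos_of_equiv_weightedSumSquares hw'] at hp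
  rw [sigNeg_of_equiv_weightedSumSquares hw, sigNeg_of_equiv_weightedSumSquares hw'] at hn
  have e1 : ∀ s : SignType, (0 < (s : ℝ)) ↔ s = 1 := by intro s; cases s <;> simp
  have e2 : ∀ s : SignType, ((s : ℝ) < 0) ↔ s = -1 := by intro s; cases s <;> simp
  simp only [e1] at hp
  simp only [e2] at hn
  obtain ⟨σ, hσ⟩ := exists_perm w w' hd hp hn
  refine hw.trans (Equivalent.trans ?_ hw'.symm)
  refine ⟨⟨LinearEquiv.funCongrLeft ℝ ℝ σ.symm, fun x => ?_⟩⟩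
  simp only [AddHom.toFun_eq_coe, LinearMap.coe_toAddHom, LinearEquiv.coe_coe,
    weightedSumSquares_apply, LinearEquiv.funCongrLeft_apply, LinearMap.funLeft_apply]
  rw [← σ.sum_comp]
  simp [hσ]

variable {E : Type*} [AddCommGroup E] [Module ℝ E] [FiniteDimensional ℝ E]

lemma posIdx_eq (B : LinearMap.BilinForm ℝ E) (W : Submodule ℝ E) :
    posIdx B W = sigPos (LinearMap.BilinMap.toQuadraticMap (B.restrict W)) := by
  refine Eq.trans (congrArg sSup ?_)
    (sigPos_isGreatest (LinearMap.BilinMap.toQuadraticMap (B.restrict W))).csSup_eq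
  ext k
  constructor
  · rintro ⟨P, hPW, hk, hP⟩
    refine ⟨P.comap W.subtype, ?_, ?_⟩
    · rw [← hk]
      exact (Submodule.comapSubtypeEquivOfLe hPW).finrank_eq
    · rintro ⟨x, hx⟩ hx0
      exact hP x hx (by simpa using hx0)
  · rintro ⟨P, hk, hP⟩
    refine ⟨P.map W.subtype, Submodule.map_subtype_le _ _, ?_, ?_⟩
    · rw [← hk]
      exact Submodule.finrank_map_subtype_eq _ _
    · rintro _ ⟨x, hx, rfl⟩ hx0
      exact hP ⟨x, hx⟩ (by simpa using hx0)

lemma negIdx_eq (B : LinearMap.BilinForm ℝ E) (W : Submodule ℝ E) :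
    negIdx B W = sigNeg (LinearMap.BilinMap.toQuadraticMap (B.restrict W)) := by
  have h1 : negIdx B W = posIdx (-B) W := by
    unfold negIdx posIdx
    simp
  rw [h1, posIdx_eq, ← sigPos_neg]
  congr 1

lemma exists_isom (B : LinearMap.BilinForm ℝ E) (hB : ∀ x y, B x y = B y x)
    (W V : Submodule ℝ E) (hd : finrank ℝ W = finrank ℝ V)
    (hs : signat B V = signat B W) :
    ∃ e : W ≃ₗ[ℝ] V, ∀ x y, B.restrict V (e x) (e y) = B.restrict W x y := by
  simp only [signat, Prod.mk.injEq] at hs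
  obtain ⟨hp, hn, -⟩ := hs
  rw [posIdx_eq, posIdx_eq] at hp
  rw [negIdx_eq, negIdx_eq] at hn
  obtain ⟨e⟩ := equivalent_of_sig _ _ hd hp.symm hn.symm
  have he : ∀ x : W, B (e x : E) (e x : E) = B (x : E) (x : E) := fun x => e.map_app x
  refine ⟨e.toLinearEquiv, fun x y => ?_⟩
  change B (e x : E) (e y : E) = B (x : E) (y : E)
  have h1 := he (x + y)
  have h2 : e (x + y) = e x + e y := map_add e.toLinearEquiv x y
  rw [h2] at h1
  simp only [Submodule.coe_add, map_add, LinearMap.add_apply] at h1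
  rw [he x, he y, hB (e y) (e x), hB y x] at h1
  linarith

lemma mem_rad_iff (B : LinearMap.BilinForm ℝ E) (hB : ∀ x y, B x y = B y x)
    (W : Submodule ℝ E) (x : W) : (x : E) ∈ rad B W ↔ ∀ y, B.restrict W x y = 0 := by
  constructor
  · intro h y
    have := h.2 (y : E) y.2
    change B (x : E) (y : E) = 0
    rw [hB]; exact this
  · intro h
    refine ⟨x.2, fun y hy => ?_⟩
    have : B (x : E) y = 0 := h ⟨y, hy⟩
    rw [hB] at this; exact this

/-- The backward direction for a nondegenerate form. -/
lemma flag_back (B : LinearMap.BilinForm ℝ E) (hB : ∀ x y, B x y = B y x)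
    (hnd : ∀ x, (∀ y, B x y = 0) → x = 0)
    (V₁ V₂ W₁ W₂ : Submodule ℝ E) (hV : V₁ ≤ V₂) (hW : W₁ ≤ W₂)
    (hd1 : finrank ℝ W₁ = finrank ℝ V₁) (hd2 : finrank ℝ W₂ = finrank ℝ V₂)
    (hs2 : signat B V₂ = signat B W₂) (hs1 : signat B V₁ = signat B W₁)
    (hr : finrank ℝ (V₁ ⊓ rad B V₂ : Submodule ℝ E) = finrank ℝ (W₁ ⊓ rad B W₂ : Submodule ℝ E)) :
    ∃ g : E ≃ₗ[ℝ] E, (∀ x y, B (g x) (g y) = B x y) ∧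
      V₁ = W₁.map g.toLinearMap ∧ V₂ = W₂.map g.toLinearMap := by
  have hsub : ∀ (W : Submodule ℝ E) (x y : W), B.restrict W x y = B.restrict W y x :=
    fun W x y => hB x y
  obtain ⟨e1, he1⟩ := exists_isom B hB W₁ V₁ hd1 hs1
  obtain ⟨e2, he2⟩ := exists_isom B hB W₂ V₂ hd2 hs2
  -- step 1
  let r : (W₁ ⊓ rad B W₂ : Submodule ℝ E) ≃ₗ[ℝ] (V₁ ⊓ rad B V₂ : Submodule ℝ E) :=
    LinearEquiv.ofFinrankEq _ _ hr.symm
  have zW : ∀ (X Y : Submodule ℝ E) (_ : X ≤ Y) (x : (X ⊓ rad B Y : Submodule ℝ E)) (y : X),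
      B.restrict X (Submodule.inclusion inf_le_left x) y = 0 := by
    intro X Y hXY x y
    have := x.2.2.2 (y : E) (hXY y.2)
    change B (x : E) (y : E) = 0
    rw [hB]; exact this
  obtain ⟨f1, hf1, hf1r⟩ := witt_two (B.restrict W₁) (B.restrict V₁) (hsub W₁) e1 he1
    (Submodule.inclusion (inf_le_left : W₁ ⊓ rad B W₂ ≤ W₁))
    (Submodule.inclusion (inf_le_left : V₁ ⊓ rad B V₂ ≤ V₁) ∘ₗ r.toLinearMap)
    (Submodule.inclusion_injective _)
    ((Submodule.inclusion_injective (inf_le_left : V₁ ⊓ rad B V₂ ≤ V₁)).comp r.injective)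
    (fun x y => by
      rw [zW W₁ W₂ hW]
      exact (zW V₁ V₂ hV (r x) _).symm)
    (fun x => ⟨fun _ y => zW V₁ V₂ hV (r x) y, fun _ y => zW W₁ W₂ hW x y⟩)
  have hrad : ∀ x : W₁, (x : E) ∈ rad B W₂ ↔ (f1 x : E) ∈ rad B V₂ := by
    intro x
    constructor
    · intro hx
      have := hf1r ⟨x, x.2, hx⟩
      have h2 : f1 x = Submodule.inclusion inf_le_left (r ⟨x, x.2, hx⟩) := this
      rw [h2]
      exact (r ⟨x, x.2, hx⟩).2.2
    · intro hx
      have := hf1r (r.symm ⟨f1 x, (f1 x).2, hx⟩)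
      have h2 : f1 (Submodule.inclusion inf_le_left (r.symm ⟨f1 x, (f1 x).2, hx⟩)) = f1 x := by
        rw [this]
        apply Subtype.ext
        simp
      have h3 := f1.injective h2
      rw [← h3]
      exact (r.symm ⟨f1 x, (f1 x).2, hx⟩).2.2
  -- step 2
  obtain ⟨f2, hf2, hf21⟩ := witt_two (B.restrict W₂) (B.restrict V₂) (hsub W₂) e2 he2
    (Submodule.inclusion hW) (Submodule.inclusion hV ∘ₗ f1.toLinearMap)
    (Submodule.inclusion_injective _)
    ((Submodule.inclusion_injective hV).comp f1.injective)
    (fun x y => (hf1 x y).symm)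
    (fun x => by
      rw [← mem_rad_iff B hB, ← mem_rad_iff B hB]
      exact hrad x)
  -- step 3
  obtain ⟨g, hg, hg2⟩ := witt_two B B hB (LinearEquiv.refl ℝ E) (fun _ _ => rfl)
    W₂.subtype (V₂.subtype ∘ₗ f2.toLinearMap) (Submodule.subtype_injective _)
    ((Submodule.subtype_injective _).comp f2.injective)
    (fun x y => (hf2 x y).symm)
    (fun x => by
      constructor
      · intro h
        have : x = 0 := Subtype.ext (hnd _ h)
        intro y; simp [this]
      · intro h
        have : f2 x = 0 := Subtype.ext (hnd _ h)
        have : x = 0 := by simpa using this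
        intro y; simp [this])
  have hg2' : ∀ x : W₂, g x = (f2 x : E) := hg2
  have hg1 : ∀ x : W₁, g x = (f1 x : E) := fun x => by
    have h1 := hg2' (Submodule.inclusion hW x)
    rw [hf21] at h1
    exact h1
  refine ⟨g, hg, ?_, ?_⟩
  · ext v
    constructor
    · intro hv
      refine ⟨f1.symm ⟨v, hv⟩, (f1.symm ⟨v, hv⟩).2, ?_⟩
      change g _ = v
      rw [hg1]; simp
    · rintro ⟨x, hx, rfl⟩
      change g x ∈ V₁
      rw [hg1 ⟨x, hx⟩]; exact (f1 _).2
  · ext v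
    constructor
    · intro hv
      refine ⟨f2.symm ⟨v, hv⟩, (f2.symm ⟨v, hv⟩).2, ?_⟩
      change g _ = v
      rw [hg2']; simp
    · rintro ⟨x, hx, rfl⟩
      change g x ∈ V₂
      rw [hg2' ⟨x, hx⟩]; exact (f2 _).2

lemma rad_map (B : LinearMap.BilinForm ℝ E) (g : E ≃ₗ[ℝ] E)
    (hg : ∀ x y, B (g x) (g y) = B x y) (W : Submodule ℝ E) :
    rad B (W.map g.toLinearMap) = (rad B W).map g.toLinearMap := by
  ext x
  constructor
  · rintro ⟨⟨w, hw, rfl⟩, h⟩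
    refine ⟨w, ⟨hw, fun y hy => ?_⟩, rfl⟩
    have := h (g y) ⟨y, hy, rfl⟩
    exact (hg y w).symm.trans this
  · rintro ⟨w, ⟨hw, h⟩, rfl⟩
    refine ⟨⟨w, hw, rfl⟩, ?_⟩
    rintro _ ⟨y, hy, rfl⟩
    exact (hg y w).trans (h y hy)

lemma idx_map (B : LinearMap.BilinForm ℝ E) (g : E ≃ₗ[ℝ] E)
    (hg : ∀ x y, B (g x) (g y) = B x y) (W : Submodule ℝ E) (p : ℝ → Prop) :
    {k | ∃ P : Submodule ℝ E, P ≤ W.map g.toLinearMap ∧ finrank ℝ P = k ∧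
      ∀ x ∈ P, x ≠ 0 → p (B x x)} =
    {k | ∃ P : Submodule ℝ E, P ≤ W ∧ finrank ℝ P = k ∧ ∀ x ∈ P, x ≠ 0 → p (B x x)} := by
  ext k
  constructor
  · rintro ⟨P, hP, hk, h⟩
    refine ⟨P.map g.symm.toLinearMap, ?_, ?_, ?_⟩
    · rintro _ ⟨x, hx, rfl⟩
      obtain ⟨w, hw, rfl⟩ := hP hx
      simpa using hw
    · rw [← hk]; exact LinearEquiv.finrank_map_eq g.symm P
    · rintro _ ⟨x, hx, rfl⟩ h0
      have := h x hx (by rintro rfl; simp at h0)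
      rw [← hg]; simpa using this
  · rintro ⟨P, hP, hk, h⟩
    refine ⟨P.map g.toLinearMap, Submodule.map_mono hP, ?_, ?_⟩
    · rw [← hk]; exact LinearEquiv.finrank_map_eq g P
    · rintro _ ⟨x, hx, rfl⟩ h0
      have := h x hx (by rintro rfl; simp at h0)
      change p (B (g x) (g x))
      rwa [hg]

lemma signat_map (B : LinearMap.BilinForm ℝ E) (g : E ≃ₗ[ℝ] E)
    (hg : ∀ x y, B (g x) (g y) = B x y) (W : Submodule ℝ E) :
    signat B (W.map g.toLinearMap) = signat B W := by
  have h1 : posIdx B (W.map g.toLinearMap) = posIdx B W :=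
    congrArg sSup (idx_map B g hg W (fun t => 0 < t))
  have h2 : negIdx B (W.map g.toLinearMap) = negIdx B W :=
    congrArg sSup (idx_map B g hg W (fun t => t < 0))
  have h3 : finrank ℝ (rad B (W.map g.toLinearMap)) = finrank ℝ (rad B W) := by
    rw [rad_map B g hg]; exact LinearEquiv.finrank_map_eq g _
  simp only [signat, h1, h2, h3]

end Sylv

lemma stdForm_apply (p q : ℕ) (x y : Fin (p + q) → ℝ) :
    stdForm p q x y = ∑ i, x i * ((if (i : ℕ) < p then (1 : ℝ) else -1) * y i) := by
  simp [stdForm, Matrix.toLinearMap₂'_apply', dotProduct, Matrix.mulVec_diagonal]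

/-- Two flags `(V₁, V₂)` and `(W₁, W₂)` in `F_{k₁,k₂}` lie in the same `O(p,q)`-orbit if and
only if `sign V₂ = sign W₂`, `sign V₁ = sign W₁` and
`dim (V₁ ∩ rad V₂) = dim (W₁ ∩ rad W₂)`. -/
theorem flag_orbit_iff_signature_and_radical (p q k₁ k₂ : ℕ)
    (hp : 1 ≤ p) (hq : 1 ≤ q) (hk₁ : 1 ≤ k₁) (hk₁₂ : k₁ < k₂) (hk₂ : k₂ ≤ p + q)
    (V₁ V₂ W₁ W₂ : Submodule ℝ (Fin (p + q) → ℝ))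
    (hV : V₁ ≤ V₂) (hW : W₁ ≤ W₂)
    (hV₁ : finrank ℝ V₁ = k₁) (hV₂ : finrank ℝ V₂ = k₂)
    (hW₁ : finrank ℝ W₁ = k₁) (hW₂ : finrank ℝ W₂ = k₂) :
    (∃ g : (Fin (p + q) → ℝ) ≃ₗ[ℝ] (Fin (p + q) → ℝ),
        (∀ x y, stdForm p q (g x) (g y) = stdForm p q x y) ∧
          V₁ = W₁.map g.toLinearMap ∧ V₂ = W₂.map g.toLinearMap) ↔
      (signat (stdForm p q) V₂ = signat (stdForm p q) W₂ ∧
        signat (stdForm p q) V₁ = signat (stdForm p q) W₁ ∧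
        finrank ℝ (V₁ ⊓ rad (stdForm p q) V₂ : Submodule ℝ (Fin (p + q) → ℝ)) =
          finrank ℝ (W₁ ⊓ rad (stdForm p q) W₂ : Submodule ℝ (Fin (p + q) → ℝ))) := by
  have hB : ∀ x y, stdForm p q x y = stdForm p q y x := by
    intro x y
    rw [stdForm_apply, stdForm_apply]
    exact Finset.sum_congr rfl fun i _ => by ring
  have hnd : ∀ x, (∀ y, stdForm p q x y = 0) → x = 0 := by
    intro x hx
    funext i
    have := hx (Pi.single i 1)
    rw [stdForm_apply, Finset.sum_eq_single i] at this
    · split_ifs at this <;> simpa using this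
    · intro j _ hj
      simp [hj]
    · simp
  constructor
  · rintro ⟨g, hg, rfl, rfl⟩
    refine ⟨signat_map _ g hg _, signat_map _ g hg _, ?_⟩
    rw [rad_map _ g hg, ← Submodule.map_inf _ g.injective]
    exact LinearEquiv.finrank_map_eq g _
  · rintro ⟨h2, h1, hr⟩
    exact flag_back _ hB hnd V₁ V₂ W₁ W₂ hV hW (hW₁.trans hV₁.symm) (hW₂.trans hV₂.symm) h2 h1 hr
end
end
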